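/- arXiv:cs/0410039 — 8 statements merged into one kernel-verified Lean document; each statement's English description precedes it below -/
import Mathlib

section
/- Let G be a finite graph with vertex set V, let P be a hereditary property on G, and let v ∈ V. Then every maximal P-subgraph M of G satisfies: either M is a maximal P-subgraph of G[V∖{v}], or there exists a maximal P-subgraph H of G[V∖{v}] such that M is a maximal P-subgraph of G[H ∪ {v}]. Equivalently, MaxSol_P(G) ⊆ MaxSol_P(G[V∖{v}]) ∪ ⋃_{H ∈ MaxSol_P(G[V∖{v}])} MaxSol_P(G[H ∪ {v}]). -/
/-- `S` is a maximal `P`-subgraph of `G[W]`: `S ⊆ W`, `P S` holds, and no `T`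
with `S ⊊ T ⊆ W` satisfies `P`. -/
def MaximalPIn {V : Type*} (P : Set V → Prop) (W S : Set V) : Prop :=
  S ⊆ W ∧ P S ∧ ∀ T : Set V, S ⊂ T → T ⊆ W → ¬ P T

/-- for a hereditary property `P` on a finite graph `G` and a
vertex `v`, every maximal `P`-subgraph `M` of `G` is either a maximal
`P`-subgraph of `G[V ∖ {v}]`, or a maximal `P`-subgraph of `G[H ∪ {v}]` for
some maximal `P`-subgraph `H` of `G[V ∖ {v}]`. -/
theorem maxSol_subset_of_deleteVertex {V : Type*} [Fintype V] (G : SimpleGraph V)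
    (P : Set V → Prop) (hered : ∀ S T : Set V, P S → T ⊆ S → P T) (v : V)
    (M : Set V) (hM : MaximalPIn P Set.univ M) :
    MaximalPIn P (Set.univ \ {v}) M ∨
      ∃ H : Set V, MaximalPIn P (Set.univ \ {v}) H ∧
        MaximalPIn P (insert v H) M := by
  obtain ⟨-, hP, hmax⟩ := hM
  by_cases hv : v ∈ M
  · right
    have hfin : {S : Set V | P S ∧ S ⊆ Set.univ \ {v}}.Finite := Set.toFinite _
    obtain ⟨H, hle, hH⟩ := hfin.exists_le_maximal
      (show M \ {v} ∈ {S : Set V | P S ∧ S ⊆ Set.univ \ {v}} from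
        ⟨hered _ _ hP Set.diff_subset, fun x hx => ⟨trivial, hx.2⟩⟩)
    refine ⟨H, ⟨hH.prop.2, hH.prop.1, fun T hT hTW hPT => ?_⟩, ?_, hP,
      fun T hT _ => hmax T hT (Set.subset_univ _)⟩
    · exact hT.2 (hH.le_of_ge ⟨hPT, hTW⟩ hT.1)
    · intro x hx
      by_cases hxv : x = v
      · exact Or.inl hxv
      · exact Or.inr (hle ⟨hx, hxv⟩)
  · left
    refine ⟨fun x hx => ⟨trivial, fun h => hv ?_⟩, hP,
      fun T hT _ => hmax T hT (Set.subset_univ _)⟩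
    have h2 : x = v := h
    exact h2 ▸ hx
end

section
/- Let G be a finite graph with vertex set V, let P be a hereditary property on G, and let v ∈ V. Then MaxSol_P(G) is exactly the set of those S belonging to MaxSol_P(G[V∖{v}]) ∪ ⋃_{H ∈ MaxSol_P(G[V∖{v}])} MaxSol_P(G[H ∪ {v}]) that are maximal P-subgraphs of G. -/
/-- for a hereditary property `P` on a finite graph `G` and a
vertex `v`, `MaxSol_P(G)` is exactly the set of those `S` in
`MaxSol_P(G[V ∖ {v}]) ∪ ⋃_{H ∈ MaxSol_P(G[V ∖ {v}])} MaxSol_P(G[H ∪ {v}])`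
that are maximal `P`-subgraphs of `G`. -/
theorem maxSol_eq_filter_candidates {V : Type*} [Fintype V] (G : SimpleGraph V)
    (P : Set V → Prop) (hered : ∀ S T : Set V, P S → T ⊆ S → P T) (v : V) :
    {M : Set V | MaximalPIn P Set.univ M} =
      {S : Set V |
        (MaximalPIn P (Set.univ \ {v}) S ∨
          ∃ H : Set V, MaximalPIn P (Set.univ \ {v}) H ∧
            MaximalPIn P (insert v H) S) ∧
        MaximalPIn P Set.univ S} := by
  ext M
  simp only [Set.mem_setOf_eq]
  refine ⟨fun hM => ⟨?_, hM⟩, fun h => h.2⟩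
  obtain ⟨-, hPM, hmax⟩ := hM
  by_cases hv : v ∈ M
  · right
    have hne : M \ {v} ∈ {T : Set V | P T ∧ T ⊆ Set.univ \ {v}} :=
      ⟨hered M _ hPM Set.diff_subset, Set.diff_subset_diff_left (Set.subset_univ M)⟩
    obtain ⟨H, hle, hH⟩ :=
      (Set.toFinite {T : Set V | P T ∧ T ⊆ Set.univ \ {v}}).exists_le_maximal hne
    refine ⟨H, ⟨hH.prop.2, hH.prop.1, fun T hT hTW hPT => ?_⟩, ?_, hPM,
      fun T hT _ => hmax T hT (Set.subset_univ T)⟩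
    · exact hT.2 (hH.le_of_ge ⟨hPT, hTW⟩ hT.1)
    · intro x hx
      by_cases hxv : x = v
      · exact Or.inl hxv
      · exact Or.inr (hle ⟨hx, hxv⟩)
  · left
    refine ⟨fun x hx => ⟨trivial, fun h => hv ?_⟩, hPM,
      fun T hT _ => hmax T hT (Set.subset_univ T)⟩
    rw [Set.mem_singleton_iff] at h
    exact h ▸ hx
end

section
/- Let G be a finite graph with vertex set V, let P be a hereditary property on G, and let W ⊆ V. Then the number of maximal P-subgraphs of G[W] is at most the number of maximal P-subgraphs of G, i.e., |MaxSol_P(G[W])| ≤ |MaxSol_P(G)|. -/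
/-- for a hereditary property `P` on a finite graph `G` and any
`W ⊆ V`, the number of maximal `P`-subgraphs of `G[W]` is at most the number
of maximal `P`-subgraphs of `G`. -/
theorem card_maxSol_restriction_le {V : Type*} [Fintype V] (G : SimpleGraph V)
    (P : Set V → Prop) (hered : ∀ S T : Set V, P S → T ⊆ S → P T)
    (W : Set V) :
    {S : Set V | MaximalPIn P W S}.ncard ≤
      {S : Set V | MaximalPIn P Set.univ S}.ncard := by
  classical
  have ext : ∀ S : Set V, MaximalPIn P W S →
      ∃ M : Set V, MaximalPIn P Set.univ M ∧ M ∩ W = S := by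
    rintro S ⟨hSW, hPS, hmax⟩
    obtain ⟨M, hSM, hM⟩ := (Set.toFinite {T : Set V | P T}).exists_le_maximal hPS
    refine ⟨M, ⟨Set.subset_univ _, hM.prop, fun T hT _ hPT => ?_⟩, ?_⟩
    · exact hT.2 (hM.2 hPT hT.1)
    · by_contra hne
      have h1 : S ⊆ M ∩ W := Set.subset_inter hSM hSW
      exact hmax (M ∩ W) (h1.ssubset_of_ne (Ne.symm hne)) Set.inter_subset_right
        (hered M _ hM.prop Set.inter_subset_left)
  have hsub : {S : Set V | MaximalPIn P W S} ⊆
      (fun M => M ∩ W) '' {S : Set V | MaximalPIn P Set.univ S} := by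
    intro S hS
    obtain ⟨M, hM, h⟩ := ext S hS
    exact ⟨M, hM, h⟩
  exact (Set.ncard_le_ncard hsub (Set.toFinite _)).trans (Set.ncard_image_le (Set.toFinite _))
end

section
/- Let G be a finite graph with vertex set V, let P be a connected-hereditary property on G, let W ⊆ V and v_r ∈ W. Let H be a subset of W containing v_r that is maximal among subsets S ⊆ W with P(S) and v_r ∈ S, and let M ⊆ V with P(M), v_r ∈ M and H ⊆ M. Then H equals the vertex set of the connected component of v_r in the induced subgraph G[M ∩ W]. -/
/-- `G[S]` is connected: `S` is nonempty and any two vertices of `S` are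
joined by a path inside the induced subgraph `G[S]`. -/
def ConnOn {V : Type*} (G : SimpleGraph V) (S : Set V) : Prop :=
  S.Nonempty ∧ ∀ u ∈ S, ∀ v ∈ S,
    Relation.ReflTransGen (fun a b => a ∈ S ∧ b ∈ S ∧ G.Adj a b) u v

/-- for a connected-hereditary property `P` on a finite graph
`G`, `W ⊆ V`, `v_r ∈ W`: if `H` is maximal among the subsets `S ⊆ W` with
`P S` and `v_r ∈ S`, and `M` satisfies `P M`, `v_r ∈ M`, `H ⊆ M`, then `H` is
the vertex set of the connected component of `v_r` in `G[M ∩ W]`. -/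
theorem maximal_with_vertex_eq_component {V : Type*} [Fintype V] (G : SimpleGraph V)
    (P : Set V → Prop)
    (hconn : ∀ S : Set V, P S → ConnOn G S)
    (hered : ∀ S T : Set V, P S → T ⊆ S → ConnOn G T → P T)
    (W : Set V) (vr : V) (hvrW : vr ∈ W)
    (H : Set V) (hHW : H ⊆ W) (hvrH : vr ∈ H) (hPH : P H)
    (hmax : ∀ T : Set V, H ⊂ T → T ⊆ W → vr ∈ T → ¬ P T)
    (M : Set V) (hPM : P M) (hvrM : vr ∈ M) (hHM : H ⊆ M) :
    H = {u ∈ M ∩ W |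
      Relation.ReflTransGen
        (fun a b => a ∈ M ∩ W ∧ b ∈ M ∩ W ∧ G.Adj a b) vr u} := by
  set R : V → V → Prop := fun a b => a ∈ M ∩ W ∧ b ∈ M ∩ W ∧ G.Adj a b with hR
  set C : Set V := {u ∈ M ∩ W | Relation.ReflTransGen R vr u} with hC
  have hvrC : vr ∈ C := ⟨⟨hvrM, hvrW⟩, Relation.ReflTransGen.refl⟩
  have hHC : H ⊆ C := by
    intro u hu
    refine ⟨⟨hHM hu, hHW hu⟩, ?_⟩
    refine Relation.ReflTransGen.mono ?_ _ _ ((hconn H hPH).2 vr hvrH u hu)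
    rintro a b ⟨ha, hb, hab⟩
    exact ⟨⟨hHM ha, hHW ha⟩, ⟨hHM hb, hHW hb⟩, hab⟩
  have key : ∀ u, Relation.ReflTransGen R vr u →
      Relation.ReflTransGen (fun a b => a ∈ C ∧ b ∈ C ∧ G.Adj a b) vr u := by
    intro u hu
    induction hu with
    | refl => exact Relation.ReflTransGen.refl
    | tail h1 h2 ih =>
      exact ih.tail ⟨⟨h2.1, h1⟩, ⟨h2.2.1, h1.tail h2⟩, h2.2.2⟩
  have hsymm : ∀ u, Relation.ReflTransGen (fun a b => a ∈ C ∧ b ∈ C ∧ G.Adj a b) vr u →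
      Relation.ReflTransGen (fun a b => a ∈ C ∧ b ∈ C ∧ G.Adj a b) u vr := by
    intro u hu
    induction hu with
    | refl => exact Relation.ReflTransGen.refl
    | tail h1 h2 ih => exact Relation.ReflTransGen.head ⟨h2.2.1, h2.1, h2.2.2.symm⟩ ih
  have hCc : ConnOn G C :=
    ⟨⟨vr, hvrC⟩, fun u hu v hv => (hsymm u (key u hu.2)).trans (key v hv.2)⟩
  by_contra hne
  exact hmax C (hHC.ssubset_of_ne hne) (fun u hu => hu.1.2) hvrC
    (hered M C hPM (fun u hu => hu.1.1) hCc)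
end

section
/- Let G be a finite graph with vertex set V, let P be a connected-hereditary property on G, let W ⊆ V and v_r ∈ W. Then the number of subsets of W containing v_r that are maximal among subsets S ⊆ W with P(S) and v_r ∈ S is at most the number of subsets of V containing v_r that are maximal among subsets S ⊆ V with P(S) and v_r ∈ S; i.e., |MaxSol_P^{v_r}(G[W])| ≤ |MaxSol_P^{v_r}(G)|. -/
/-- `S ∈ MaxSol_P^{v}(G[W])`: `S ⊆ W`, `P S`, `v ∈ S`, and `S` is maximal
among such subsets (no `T` with `S ⊊ T ⊆ W`, `v ∈ T` and `P T`). -/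
def MaximalPInWith {V : Type*} (P : Set V → Prop) (W : Set V) (v : V) (S : Set V) : Prop :=
  S ⊆ W ∧ P S ∧ v ∈ S ∧ ∀ T : Set V, S ⊂ T → T ⊆ W → v ∈ T → ¬ P T

theorem connOn_union_aux {V : Type*} {G : SimpleGraph V} {S T : Set V} {r : V}
    (hS : ConnOn G S) (hT : ConnOn G T) (rS : r ∈ S) (rT : r ∈ T) : ConnOn G (S ∪ T) := by
  have hl : ∀ u v, Relation.ReflTransGen (fun a b => a ∈ S ∧ b ∈ S ∧ G.Adj a b) u v →
      Relation.ReflTransGen (fun a b => a ∈ S ∪ T ∧ b ∈ S ∪ T ∧ G.Adj a b) u v :=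
    fun u v h => Relation.ReflTransGen.mono (fun a b h => ⟨Or.inl h.1, Or.inl h.2.1, h.2.2⟩) _ _ h
  have hr : ∀ u v, Relation.ReflTransGen (fun a b => a ∈ T ∧ b ∈ T ∧ G.Adj a b) u v →
      Relation.ReflTransGen (fun a b => a ∈ S ∪ T ∧ b ∈ S ∪ T ∧ G.Adj a b) u v :=
    fun u v h => Relation.ReflTransGen.mono (fun a b h => ⟨Or.inr h.1, Or.inr h.2.1, h.2.2⟩) _ _ h
  refine ⟨⟨r, Or.inl rS⟩, fun u hu v hv => ?_⟩
  refine Relation.ReflTransGen.trans (b := r) ?_ ?_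
  · rcases hu with hu | hu
    · exact hl _ _ (hS.2 u hu r rS)
    · exact hr _ _ (hT.2 u hu r rT)
  · rcases hv with hv | hv
    · exact hl _ _ (hS.2 r rS v hv)
    · exact hr _ _ (hT.2 r rT v hv)

/-- for a connected-hereditary property `P` on a finite graph
`G`, `W ⊆ V` and `v_r ∈ W`, we have `|MaxSol_P^{v_r}(G[W])| ≤ |MaxSol_P^{v_r}(G)|`. -/
theorem card_maxSolWith_restriction_le {V : Type*} [Fintype V] (G : SimpleGraph V)
    (P : Set V → Prop)
    (hconn : ∀ S : Set V, P S → ConnOn G S)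
    (hered : ∀ S T : Set V, P S → T ⊆ S → ConnOn G T → P T)
    (W : Set V) (vr : V) (hvrW : vr ∈ W) :
    {S : Set V | MaximalPInWith P W vr S}.ncard ≤
      {S : Set V | MaximalPInWith P Set.univ vr S}.ncard := by
  classical
  have ex : ∀ S : Set V, MaximalPInWith P W vr S →
      ∃ M : Set V, S ⊆ M ∧ MaximalPInWith P Set.univ vr M := by
    intro S hS
    obtain ⟨M, hSM, hM⟩ := (Set.toFinite {T : Set V | P T ∧ vr ∈ T}).exists_le_maximal
      (a := S) ⟨hS.2.1, hS.2.2.1⟩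
    exact ⟨M, hSM, Set.subset_univ _, hM.prop.1, hM.prop.2,
      fun T hMT _ hv hT => hMT.2 (hM.le_of_ge ⟨hT, hv⟩ hMT.1)⟩
  have key : ∀ S T M : Set V, MaximalPInWith P W vr S → MaximalPInWith P W vr T →
      P M → S ⊆ M → T ⊆ M → T ⊆ S := by
    intro S T M hS hT hM hSM hTM
    by_contra hn
    have hU : P (S ∪ T) := hered M _ hM (Set.union_subset hSM hTM)
      (connOn_union_aux (hconn S hS.2.1) (hconn T hT.2.1) hS.2.2.1 hT.2.2.1)
    exact hS.2.2.2 (S ∪ T)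
      ⟨Set.subset_union_left, fun h => hn (Set.subset_union_right.trans h)⟩
      (Set.union_subset hS.1 hT.1) (Or.inl hS.2.2.1) hU
  choose! f hf using ex
  refine Set.ncard_le_ncard_of_injOn f (fun S hS => (hf S hS).2) ?_ (Set.toFinite _)
  intro S hS T hT hST
  have hTM : T ⊆ f S := hST ▸ (hf T hT).1
  have hP : P (f S) := (hf S hS).2.2.1
  exact Set.Subset.antisymm (key T S _ hT hS hP hTM (hf S hS).1)
    (key S T _ hS hT hP (hf S hS).1 hTM)
end

section
/- Let G be a finite directed graph with vertex set V and distinguished vertex r, let P be a rooted-hereditary property on G, let W ⊆ V with r ∈ W. Let H be a maximal P-subgraph of G[W], and let M ⊆ V with P(M) and H ⊆ M. Then H equals the set of vertices of M ∩ W that are reachable from r by a directed path inside the induced subgraph G[M ∩ W]. -/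
/-- `G[S]` is rooted at `r`: `r ∈ S` and every vertex of `S` is reachable from
`r` by a directed path inside the induced subgraph `G[S]`. -/
def RootedOn {V : Type*} (E : V → V → Prop) (r : V) (S : Set V) : Prop :=
  r ∈ S ∧ ∀ v ∈ S,
    Relation.ReflTransGen (fun a b => a ∈ S ∧ b ∈ S ∧ E a b) r v

/-- for a rooted-hereditary property `P` on a finite directed
graph `G = (V, E, r)` and `W ⊆ V` with `r ∈ W`: if `H` is a maximal
`P`-subgraph of `G[W]` and `M ⊆ V` satisfies `P M` and `H ⊆ M`, then `H` is
the set of vertices of `M ∩ W` reachable from `r` by a directed path inside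
`G[M ∩ W]`. -/
theorem maximal_rooted_eq_reachable_part {V : Type*} [Fintype V]
    (E : V → V → Prop) (r : V) (P : Set V → Prop)
    (hrooted₁ : ∀ S : Set V, P S → RootedOn E r S)
    (hrooted₂ : ∀ S T : Set V, P S → T ⊆ S → RootedOn E r T → P T)
    (W : Set V) (hrW : r ∈ W)
    (H : Set V) (hH : MaximalPIn P W H)
    (M : Set V) (hPM : P M) (hHM : H ⊆ M) :
    H = {u ∈ M ∩ W |
      Relation.ReflTransGen
        (fun a b => a ∈ M ∩ W ∧ b ∈ M ∩ W ∧ E a b) r u} := by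
  obtain ⟨hHW, hPH, hmax⟩ := hH
  set R : Set V := {u ∈ M ∩ W |
      Relation.ReflTransGen
        (fun a b => a ∈ M ∩ W ∧ b ∈ M ∩ W ∧ E a b) r u} with hR
  have hrM : r ∈ M := (hrooted₁ M hPM).1
  have hrR : r ∈ R := ⟨⟨hrM, hrW⟩, Relation.ReflTransGen.refl⟩
  have hsub : H ⊆ R := by
    intro v hv
    refine ⟨⟨hHM hv, hHW hv⟩, ?_⟩
    have hpath := (hrooted₁ H hPH).2 v hv
    clear hv
    induction hpath with
    | refl => exact Relation.ReflTransGen.refl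
    | tail _ h ih =>
      exact ih.tail ⟨⟨hHM h.1, hHW h.1⟩, ⟨hHM h.2.1, hHW h.2.1⟩, h.2.2⟩
  have hroot : RootedOn E r R := by
    refine ⟨hrR, fun v hv => ?_⟩
    have hpath := hv.2
    clear hv
    induction hpath with
    | refl => exact Relation.ReflTransGen.refl
    | tail hab hbc ih =>
      exact ih.tail ⟨⟨hbc.1, hab⟩, ⟨hbc.2.1, hab.tail hbc⟩, hbc.2.2⟩
  have hPR : P R := hrooted₂ M R hPM (fun v hv => hv.1.1) hroot
  by_contra hne
  exact hmax R (hsub.ssubset_of_ne hne) (fun v hv => hv.1.2) hPR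
end

section
/- Let G be a finite directed graph with vertex set V and distinguished vertex r, let P be a rooted-hereditary property on G, and let W ⊆ V with r ∈ W. Then the number of maximal P-subgraphs of G[W] is at most the number of maximal P-subgraphs of G, i.e., |MaxSol_P(G[W])| ≤ |MaxSol_P(G)|. -/
/-- for a rooted-hereditary property `P` on a finite directed
graph `G = (V, E, r)` and `W ⊆ V` with `r ∈ W`, the number of maximal
`P`-subgraphs of `G[W]` is at most the number of maximal `P`-subgraphs of `G`. -/
theorem card_maxSol_rooted_restriction_le {V : Type*} [Fintype V]
    (E : V → V → Prop) (r : V) (P : Set V → Prop)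
    (hrooted₁ : ∀ S : Set V, P S → RootedOn E r S)
    (hrooted₂ : ∀ S T : Set V, P S → T ⊆ S → RootedOn E r T → P T)
    (W : Set V) (hrW : r ∈ W) :
    {S : Set V | MaximalPIn P W S}.ncard ≤
      {S : Set V | MaximalPIn P Set.univ S}.ncard := by
  classical
  have ext : ∀ S : Set V, P S → ∃ M, S ⊆ M ∧ MaximalPIn P Set.univ M := by
    intro S hS
    obtain ⟨M, hSM, hM⟩ := (Set.toFinite {T : Set V | P T}).exists_le_maximal hS
    refine ⟨M, hSM, Set.subset_univ _, hM.prop, fun T hT _ hPT => ?_⟩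
    exact hT.2 (hM.le_of_ge hPT hT.1)
  have uni : ∀ S S' : Set V, RootedOn E r S → RootedOn E r S' → RootedOn E r (S ∪ S') := by
    intro S S' h h'
    refine ⟨Or.inl h.1, ?_⟩
    rintro v (hv | hv)
    · exact Relation.ReflTransGen.mono (fun a b hab => ⟨Or.inl hab.1, Or.inl hab.2.1, hab.2.2⟩) _ _ (h.2 v hv)
    · exact Relation.ReflTransGen.mono (fun a b hab => ⟨Or.inr hab.1, Or.inr hab.2.1, hab.2.2⟩) _ _ (h'.2 v hv)
  have key : ∀ S S' M : Set V, MaximalPIn P W S → MaximalPIn P W S' → P M → S ⊆ M → S' ⊆ M →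
      S' ⊆ S := by
    intro S S' M h h' hM hS hS'
    by_contra hn
    refine h.2.2 (S ∪ S') ⟨Set.subset_union_left, fun hs => hn ?_⟩
      (Set.union_subset h.1 h'.1) ?_
    · exact Set.subset_union_right.trans hs
    · exact hrooted₂ M _ hM (Set.union_subset hS hS')
        (uni _ _ (hrooted₁ _ h.2.1) (hrooted₁ _ h'.2.1))
  choose! f hf using ext
  refine Set.ncard_le_ncard_of_injOn f (fun S hS => (hf S hS.2.1).2) ?_ (Set.toFinite _)
  intro S hS S' hS' he
  have a := hf S hS.2.1
  have b := hf S' hS'.2.1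
  have he : f S = f S' := he
  rw [← he] at b
  exact Set.Subset.antisymm (key S' S _ hS' hS a.2.2.1 b.1 a.1) (key S S' _ hS hS' a.2.2.1 a.1 b.1)
end

section
/- Let n ≥ 1 and let G_n be the finite simple graph with vertex set V = {w} ∪ {v_1, …, v_n} ∪ {u_1, …, u_n} (2n+1 distinct vertices) whose edges are exactly: w–v_i, w–u_i and v_i–u_i for each 1 ≤ i ≤ n. Then a subset S ⊆ V is a maximal bipartite induced subgraph of G_n (i.e., G_n[S] is 2-colorable and no proper superset T ⊋ S has G_n[T] 2-colorable) if and only if either S = V ∖ {w}, or S = {w} ∪ {x_1, …, x_n} where x_i ∈ {v_i, u_i} for each i. Consequently, G_n has exactly 2^n + 1 maximal bipartite induced subgraphs, while G_n ∖ w is itself bipartite. -/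
/-- The graph `G_n` on the `2n + 1` vertices `w = none`,
`v_i = some (i, false)` and `u_i = some (i, true)` (for `i : Fin n`), whose
edges are exactly `w–v_i`, `w–u_i` and `v_i–u_i` for each `i`. -/
def Gn (n : ℕ) : SimpleGraph (Option (Fin n × Bool)) :=
  SimpleGraph.fromRel (fun x y =>
    x = none ∨ ∃ i : Fin n, x = some (i, false) ∧ y = some (i, true))

/-- The induced subgraph `G[S]` is bipartite, i.e. `2`-colorable. -/
def BipOn {V : Type*} (G : SimpleGraph V) (S : Set V) : Prop :=
  ∃ c : V → Bool, ∀ u ∈ S, ∀ v ∈ S, G.Adj u v → c u ≠ c v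

/-- `S` is a maximal bipartite induced subgraph of `G`. -/
def MaxBipOn {V : Type*} (G : SimpleGraph V) (S : Set V) : Prop :=
  BipOn G S ∧ ∀ T : Set V, S ⊂ T → ¬ BipOn G T

theorem Gn_bip_iff (n : ℕ) (S : Set (Option (Fin n × Bool))) :
    BipOn (Gn n) S ↔
      (none ∉ S ∨ ∀ i : Fin n, ∀ b : Bool, some (i, b) ∈ S → some (i, !b) ∉ S) := by
  have h0 : ∀ p, (Gn n).Adj none (some p) := by
    intro p
    simp [Gn]
  have h1 : ∀ i j a b, (Gn n).Adj (some (i, a)) (some (j, b)) ↔ i = j ∧ a ≠ b := by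
    intro i j a b
    cases a <;> cases b <;> simp [Gn, eq_comm]
  constructor
  · rintro ⟨c, hc⟩
    by_cases hw : none ∈ S
    · right
      intro i b hb hb'
      have e1 := hc _ hw _ hb (h0 _)
      have e2 := hc _ hw _ hb' (h0 _)
      have e3 := hc _ hb _ hb' ((h1 _ _ _ _).2 ⟨rfl, by simp⟩)
      revert e1 e2 e3
      cases c none <;> cases c (some (i, b)) <;> cases c (some (i, !b)) <;> simp
    · exact Or.inl hw
  · rintro (h | h)
    · refine ⟨fun x => match x with | none => false | some p => p.2, ?_⟩
      rintro (_ | ⟨i, a⟩) hu (_ | ⟨j, b⟩) hv huv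
      · exact absurd hu h
      · exact absurd hu h
      · exact absurd hv h
      · exact ((h1 _ _ _ _).1 huv).2
    · refine ⟨fun x => x.isSome, ?_⟩
      rintro (_ | ⟨i, a⟩) hu (_ | ⟨j, b⟩) hv huv
      · exact absurd huv ((Gn n).loopless.irrefl _)
      · simp
      · simp
      · obtain ⟨rfl, hab⟩ := (h1 _ _ _ _).1 huv
        have : b = !a := by cases a <;> cases b <;> simp_all
        subst this
        exact absurd hv (h _ _ hu)

theorem Gn_bip_del (n : ℕ) : BipOn (Gn n) {x | x ≠ none} :=
  (Gn_bip_iff n _).2 (Or.inl (by simp))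

theorem Gn_bip_sel (n : ℕ) (f : Fin n → Bool) :
    BipOn (Gn n) (insert none (Set.range fun i : Fin n => some (i, f i))) := by
  refine (Gn_bip_iff n _).2 (Or.inr ?_)
  intro i b
  simp only [Set.mem_insert_iff, Set.mem_range, Option.some.injEq, Prod.mk.injEq]
  rintro (h | ⟨j, rfl, rfl⟩) <;> simp_all

theorem Gn_max_iff (n : ℕ) (hn : 1 ≤ n) (S : Set (Option (Fin n × Bool))) :
    MaxBipOn (Gn n) S ↔
        S = {x | x ≠ none} ∨
          ∃ f : Fin n → Bool,
            S = insert none (Set.range fun i : Fin n => some (i, f i)) := by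
  classical
  constructor
  · rintro ⟨hb, hm⟩
    have key : ∀ T, S ⊆ T → BipOn (Gn n) T → S = T := by
      intro T hST hT
      by_contra hne
      exact hm T (hST.ssubset_of_ne hne) hT
    by_cases hw : none ∈ S
    · right
      have h := ((Gn_bip_iff n S).1 hb).resolve_left (not_not.2 hw)
      refine ⟨fun i => decide (some (i, true) ∈ S), key _ ?_ (Gn_bip_sel n _)⟩
      rintro (_ | ⟨i, b⟩) hx
      · simp
      · refine Or.inr ⟨i, ?_⟩
        have := h i b hx
        cases b <;> simp_all
    · left
      refine key _ ?_ (Gn_bip_del n)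
      intro x hx h
      exact hw (h ▸ hx)
  · rintro (rfl | ⟨f, rfl⟩)
    · refine ⟨Gn_bip_del n, fun T hT hb => ?_⟩
      obtain ⟨x, hxT, hx⟩ := Set.exists_of_ssubset hT
      have hx0 : x = none := by simpa using hx
      subst hx0
      have h := ((Gn_bip_iff n T).1 hb).resolve_left (not_not.2 hxT)
      exact h ⟨0, hn⟩ true (hT.1 (by simp)) (hT.1 (by simp))
    · refine ⟨Gn_bip_sel n f, fun T hT hb => ?_⟩
      obtain ⟨x, hxT, hx⟩ := Set.exists_of_ssubset hT
      have h := ((Gn_bip_iff n T).1 hb).resolve_left (not_not.2 (hT.1 (by simp)))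
      rcases x with _ | ⟨i, b⟩
      · simp at hx
      · have hb2 : (!b) = f i := by
          simp at hx
          cases b <;> simp_all
        exact h i b hxT (hT.1 (Or.inr ⟨i, by simp [hb2]⟩))

/-- for `n ≥ 1`, a subset `S` of the vertices of `G_n` is a
maximal bipartite induced subgraph iff `S = V ∖ {w}` or
`S = {w} ∪ {x_1, …, x_n}` with `x_i ∈ {v_i, u_i}` for each `i`; consequently
`G_n` has exactly `2 ^ n + 1` maximal bipartite induced subgraphs, while
`G_n ∖ w` is itself bipartite. -/
theorem maximal_bipartite_subgraphs_of_Gn (n : ℕ) (hn : 1 ≤ n) :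
    (∀ S : Set (Option (Fin n × Bool)),
      MaxBipOn (Gn n) S ↔
        S = {x | x ≠ none} ∨
          ∃ f : Fin n → Bool,
            S = insert none (Set.range fun i : Fin n => some (i, f i))) ∧
      {S : Set (Option (Fin n × Bool)) | MaxBipOn (Gn n) S}.ncard = 2 ^ n + 1 ∧
      BipOn (Gn n) {x | x ≠ none} := by
  refine ⟨Gn_max_iff n hn, ?_, Gn_bip_del n⟩
  have e : {S : Set (Option (Fin n × Bool)) | MaxBipOn (Gn n) S} =
      insert {x | x ≠ none} (Set.range fun f : Fin n → Bool =>
        (insert none (Set.range fun i : Fin n => some (i, f i)) :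
          Set (Option (Fin n × Bool)))) := by
    ext S
    simp only [Set.mem_setOf_eq, Gn_max_iff n hn, Set.mem_insert_iff, Set.mem_range, eq_comm]
  rw [e, Set.ncard_insert_of_notMem, ← Set.image_univ, Set.ncard_image_of_injective,
    Set.ncard_univ]
  · simp
  · intro f g hfg
    funext i
    have : some (i, f i) ∈ (insert none (Set.range fun i : Fin n => some (i, g i)) :
          Set (Option (Fin n × Bool))) := by
      have h2 : some (i, f i) ∈ (insert none (Set.range fun i : Fin n => some (i, f i)) :
          Set (Option (Fin n × Bool))) := Or.inr ⟨i, rfl⟩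
      exact (Set.ext_iff.1 hfg _).1 h2
    simpa [eq_comm] using this
  · rintro ⟨f, hf⟩
    have := (Set.ext_iff.1 hf none).1 (Or.inl rfl)
    exact this rfl
end
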